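/- Let s ∈ ℂ with s ≠ −ω and s ≠ −ω², and let Δ ∈ ℂ³ satisfy ψ₁(Δ) ≠ 0 and ψ₂(Δ) ≠ 0. Then C_s(Δ) is reversely similar to H_s(Δ); that is, ψ₁(C_s·Δ) ≠ 0, ψ₁(H_s·Δ) ≠ 0, and ψ(C_s·Δ)³ · ψ(H_s·Δ)³ = 1. -/

import Mathlib

noncomputable def ω : ℂ := Complex.exp (2 * Real.pi * Complex.I / 3)

def J : Matrix (Fin 3) (Fin 3) ℂ := !![0,1,0; 0,0,1; 1,0,0]

noncomputable def W : Matrix (Fin 3) (Fin 3) ℂ := !![1,1,1; 1,ω,ω^2; 1,ω^2,ω]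

/-- generalized cevian operator `S[η,η'] = W ⬝ diag(1,η',η) ⬝ W⁻¹` -/
noncomputable def S (η η' : ℂ) : Matrix (Fin 3) (Fin 3) ℂ :=
  W * Matrix.diagonal ![1, η', η] * W⁻¹

/-- `ω^k` for `k : ZMod 3` (well defined since `ω^3 = 1`). -/
noncomputable def ωz (k : ZMod 3) : ℂ := ω ^ k.val

/-- `J^k` for `k : ZMod 3` (well defined since `J^3 = 1`). -/
def Jz (k : ZMod 3) : Matrix (Fin 3) (Fin 3) ℂ := J ^ k.val

/-- generalized median operator `M^{wx/yz}[η,η']` -/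
noncomputable def M (η η' : ℂ) (w x y z : ZMod 3) : Matrix (Fin 3) (Fin 3) ℂ :=
  S ((η * ωz (-x) - ωz (-w)) / (ωz (-z) - ωz (-y)))
    ((η' * ωz x - ωz w) / (ωz z - ωz y))

/-- binary Ceva operator `C_s` -/
noncomputable def C (s : ℂ) : Matrix (Fin 3) (Fin 3) ℂ :=
  W * !![1,0,0; 0,0,s+ω; 0,s+ω^2,0] * W⁻¹

/-- Hajja's operator `H_s` -/
noncomputable def H (s : ℂ) : Matrix (Fin 3) (Fin 3) ℂ := S (s+ω) (s+ω^2)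

noncomputable def ψ₀ (Δ : Fin 3 → ℂ) : ℂ := (Δ 0 + Δ 1 + Δ 2) / 3
noncomputable def ψ₁ (Δ : Fin 3 → ℂ) : ℂ := (Δ 0 + Δ 1 * ω^2 + Δ 2 * ω) / 3
noncomputable def ψ₂ (Δ : Fin 3 → ℂ) : ℂ := (Δ 0 + Δ 1 * ω + Δ 2 * ω^2) / 3
noncomputable def ψ (Δ : Fin 3 → ℂ) : ℂ := ψ₂ Δ / ψ₁ Δ

/-!
Fourier inversion says `W⁻¹ *ᵥ Δ = (ψ₀ Δ, ψ₁ Δ, ψ₂ Δ)`, so an operator `W * A * W⁻¹` acts on the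
Fourier coefficients through `A`. Hence `H s` multiplies `ψ₁` by `s + ω ^ 2` and `ψ₂` by `s + ω`,
while `C s` applies the same two factors and then swaps the coefficients: the shapes of `C s *ᵥ Δ`
and `H s *ᵥ Δ` are inverse to each other, already before cubing.
-/

open scoped Matrix

section General

variable {R : Type*} [CommRing R]

lemma dft_sq_mul_dft_eq_three_smul_one {ζ : R} (hζ : 1 + ζ + ζ ^ 2 = 0) :
    !![1, 1, 1; 1, ζ ^ 2, ζ; 1, ζ, ζ ^ 2] * !![1, 1, 1; 1, ζ, ζ ^ 2; 1, ζ ^ 2, ζ] =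
      (3 : R) • (1 : Matrix (Fin 3) (Fin 3) R) := by
  ext i j
  fin_cases i <;> fin_cases j <;> simp [Matrix.mul_apply, Fin.sum_univ_three] <;> grind

lemma inv_mulVec_conj_mulVec {n : Type*} [Fintype n] [DecidableEq n] {P : Matrix n n R}
    (hP : IsUnit P.det) (A : Matrix n n R) (v : n → R) :
    P⁻¹ *ᵥ ((P * A * P⁻¹) *ᵥ v) = A *ᵥ (P⁻¹ *ᵥ v) := by
  rw [Matrix.mulVec_mulVec, Matrix.mulVec_mulVec, Matrix.mul_assoc P,
    Matrix.nonsing_inv_mul_cancel_left P _ hP]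

end General

lemma isPrimitiveRoot_ω : IsPrimitiveRoot ω 3 :=
  Complex.isPrimitiveRoot_exp 3 three_ne_zero

lemma one_add_ω_add_ω_sq : 1 + ω + ω ^ 2 = 0 := by
  simpa only [Finset.sum_range_succ, Finset.sum_range_zero, zero_add, pow_zero, pow_one] using
    isPrimitiveRoot_ω.geom_sum_eq_zero (by norm_num)

lemma inv_three_smul_dft_sq_mul_W :
    ((3 : ℂ)⁻¹ • !![1, 1, 1; 1, ω ^ 2, ω; 1, ω, ω ^ 2]) * W = 1 := by
  rw [W, Matrix.smul_mul, dft_sq_mul_dft_eq_three_smul_one one_add_ω_add_ω_sq,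
    inv_smul_smul₀ three_ne_zero]

lemma isUnit_det_W : IsUnit W.det :=
  Matrix.isUnit_det_of_left_inverse inv_three_smul_dft_sq_mul_W

/-- The discrete Fourier transform of a triangle triple, as the vector of its three Fourier
coefficients; it puts operators of the form `W * A * W⁻¹` into the coordinates of `A`. -/
noncomputable def fourierCoeffs (Δ : Fin 3 → ℂ) : Fin 3 → ℂ := ![ψ₀ Δ, ψ₁ Δ, ψ₂ Δ]

lemma fourierCoeffs_eq_inv_W_mulVec (Δ : Fin 3 → ℂ) : fourierCoeffs Δ = W⁻¹ *ᵥ Δ := by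
  rw [Matrix.inv_eq_left_inv inv_three_smul_dft_sq_mul_W]
  ext i
  fin_cases i <;>
    simp [fourierCoeffs, ψ₀, ψ₁, ψ₂, Matrix.mulVec, dotProduct, Fin.sum_univ_three] <;> ring

lemma fourierCoeffs_conj_W_mulVec (A : Matrix (Fin 3) (Fin 3) ℂ) (Δ : Fin 3 → ℂ) :
    fourierCoeffs ((W * A * W⁻¹) *ᵥ Δ) = A *ᵥ fourierCoeffs Δ := by
  simp only [fourierCoeffs_eq_inv_W_mulVec, inv_mulVec_conj_mulVec isUnit_det_W]

lemma fourierCoeffs_S_mulVec (η η' : ℂ) (Δ : Fin 3 → ℂ) :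
    fourierCoeffs (S η η' *ᵥ Δ) = ![ψ₀ Δ, η' * ψ₁ Δ, η * ψ₂ Δ] := by
  rw [S, fourierCoeffs_conj_W_mulVec]
  ext i
  fin_cases i <;> simp [fourierCoeffs, Matrix.mulVec_diagonal]

lemma fourierCoeffs_C_mulVec (s : ℂ) (Δ : Fin 3 → ℂ) :
    fourierCoeffs (C s *ᵥ Δ) = ![ψ₀ Δ, (s + ω) * ψ₂ Δ, (s + ω ^ 2) * ψ₁ Δ] := by
  rw [C, fourierCoeffs_conj_W_mulVec]
  ext i
  fin_cases i <;> simp [fourierCoeffs, Matrix.mulVec, dotProduct, Fin.sum_univ_three]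

lemma ψ₁_H_mulVec (s : ℂ) (Δ : Fin 3 → ℂ) : ψ₁ (H s *ᵥ Δ) = (s + ω ^ 2) * ψ₁ Δ :=
  congrFun (fourierCoeffs_S_mulVec (s + ω) (s + ω ^ 2) Δ) 1

lemma ψ₂_H_mulVec (s : ℂ) (Δ : Fin 3 → ℂ) : ψ₂ (H s *ᵥ Δ) = (s + ω) * ψ₂ Δ :=
  congrFun (fourierCoeffs_S_mulVec (s + ω) (s + ω ^ 2) Δ) 2

lemma ψ₁_C_mulVec (s : ℂ) (Δ : Fin 3 → ℂ) : ψ₁ (C s *ᵥ Δ) = (s + ω) * ψ₂ Δ :=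
  congrFun (fourierCoeffs_C_mulVec s Δ) 1

lemma ψ₂_C_mulVec (s : ℂ) (Δ : Fin 3 → ℂ) : ψ₂ (C s *ᵥ Δ) = (s + ω ^ 2) * ψ₁ Δ :=
  congrFun (fourierCoeffs_C_mulVec s Δ) 2

lemma ψ_C_mulVec_eq_inv_ψ_H_mulVec (s : ℂ) (Δ : Fin 3 → ℂ) :
    ψ (C s *ᵥ Δ) = (ψ (H s *ᵥ Δ))⁻¹ := by
  rw [ψ, ψ, inv_div, ψ₁_C_mulVec, ψ₂_C_mulVec, ψ₁_H_mulVec, ψ₂_H_mulVec]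

theorem ceva_reversely_similar_hajja (s : ℂ) (hs1 : s ≠ -ω) (hs2 : s ≠ -ω ^ 2)
    (Δ : Fin 3 → ℂ) (h1 : ψ₁ Δ ≠ 0) (h2 : ψ₂ Δ ≠ 0) :
    ψ₁ ((C s).mulVec Δ) ≠ 0 ∧ ψ₁ ((H s).mulVec Δ) ≠ 0 ∧
    (ψ ((C s).mulVec Δ)) ^ 3 * (ψ ((H s).mulVec Δ)) ^ 3 = 1 := by
  have hω : s + ω ≠ 0 := fun h => hs1 (eq_neg_of_add_eq_zero_left h)
  have hω2 : s + ω ^ 2 ≠ 0 := fun h => hs2 (eq_neg_of_add_eq_zero_left h)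
  have hC₁ : ψ₁ (C s *ᵥ Δ) ≠ 0 := ψ₁_C_mulVec s Δ ▸ mul_ne_zero hω h2
  have hH₁ : ψ₁ (H s *ᵥ Δ) ≠ 0 := ψ₁_H_mulVec s Δ ▸ mul_ne_zero hω2 h1
  have hH₂ : ψ₂ (H s *ᵥ Δ) ≠ 0 := ψ₂_H_mulVec s Δ ▸ mul_ne_zero hω h2
  have hψ : ψ (H s *ᵥ Δ) ≠ 0 := div_ne_zero hH₂ hH₁
  refine ⟨hC₁, hH₁, ?_⟩
  rw [ψ_C_mulVec_eq_inv_ψ_H_mulVec, ← mul_pow, inv_mul_cancel₀ hψ, one_pow]
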